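/- arXiv:2301.09208 — 4 statements merged into one kernel-verified Lean document; each statement's English description precedes it below -/
import Mathlib

section
/- Let A be an n×n matrix with positive real entries that is symmetrically reciprocal, i.e. A_{ij}·A_{ji} = 1 for all i, j, and let x be a vector with positive real entries. Then the maximum absolute relative error satisfies max_{1≤i,j≤n} |A_{ij} − x_i/x_j| / A_{ij} = ( max_{1≤i,j≤n} A_{ij}·x_j/x_i ) − 1. Consequently, a positive vector x minimizes max_{i,j} A_{ij} x_j/x_i over all positive vectors if and only if it minimizes the maximum absolute relative error. -/
/-!
Put `r i j = A i j * x j / x i`. Reciprocity gives `r i j * r j i = 1` and turns the relative error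
at `(i, j)` into `|1 - r j i|`. If `M` is the maximum of `r`, then `r j i - 1 ≤ M - 1`, while
`1 - r j i ≤ (r j i)⁻¹ - 1 = r i j - 1 ≤ M - 1`, since `t + t⁻¹ ≥ 2` for `t > 0`; conversely
`r j i - 1` is at most the error at `(i, j)`. So the two maxima differ by exactly `1` for every
positive vector, and the two minimization problems have the same solutions.
-/

theorem le_iSup_iSup_fin {n : ℕ} (f : Fin n → Fin n → ℝ) (i j : Fin n) :
    f i j ≤ ⨆ i, ⨆ j, f i j :=
  (le_ciSup (Set.finite_range (f i)).bddAbove j).trans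
    (le_ciSup (f := fun i => ⨆ j, f i j) (Set.finite_range _).bddAbove i)

theorem relative_error_eq {a b u v : ℝ} (ha : 0 < a) (hab : a * b = 1) :
    |a - u / v| / a = |1 - b * u / v| := by
  have hb : b = a⁻¹ := eq_inv_of_mul_eq_one_right hab
  calc |a - u / v| / a = |a - u / v| / |a| := by rw [abs_of_pos ha]
    _ = |(a - u / v) / a| := (abs_div _ _).symm
    _ = |1 - b * u / v| := by
      congr 1
      rw [hb, sub_div, div_self ha.ne']
      ring

theorem iSup_relative_error_eq {n : ℕ} (hn : 0 < n) (A : Matrix (Fin n) (Fin n) ℝ)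
    (hA : ∀ i j, 0 < A i j) (hrec : ∀ i j, A i j * A j i = 1)
    (x : Fin n → ℝ) (hx : ∀ i, 0 < x i) :
    (⨆ i, ⨆ j, |A i j - x i / x j| / A i j) = (⨆ i, ⨆ j, A i j * x j / x i) - 1 := by
  haveI : Nonempty (Fin n) := ⟨⟨0, hn⟩⟩
  have herr (i j : Fin n) : |A i j - x i / x j| / A i j = |1 - A j i * x i / x j| :=
    relative_error_eq (hA i j) (hrec i j)
  apply le_antisymm
  · refine ciSup_le fun i => ciSup_le fun j => ?_
    rw [herr, abs_le]
    have h1 := le_iSup_iSup_fin (fun i j => A i j * x j / x i) i j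
    have h2 := le_iSup_iSup_fin (fun i j => A i j * x j / x i) j i
    have hprod : (A i j * x j / x i) * (A j i * x i / x j) = 1 := by
      have := (hx i).ne'
      have := (hx j).ne'
      field_simp
      exact hrec i j
    have hpos : 0 < A i j * x j / x i := div_pos (mul_pos (hA i j) (hx j)) (hx i)
    have hpos' : 0 < A j i * x i / x j := div_pos (mul_pos (hA j i) (hx i)) (hx j)
    have hsum : 2 ≤ A i j * x j / x i + A j i * x i / x j := by
      nlinarith [sq_nonneg (A i j * x j / x i - A j i * x i / x j)]
    constructor <;> linarith
  · rw [sub_le_iff_le_add]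
    refine ciSup_le fun i => ciSup_le fun j => ?_
    have h := le_iSup_iSup_fin (fun i j => |A i j - x i / x j| / A i j) j i
    have h' := neg_abs_le (1 - A i j * x j / x i)
    rw [← herr j i] at h'
    linarith


/-- For a positive symmetrically reciprocal matrix `A` and a positive vector `x`,
the maximum absolute relative error equals `(max_{i,j} A i j * x j / x i) − 1`;
consequently minimizers of `max_{i,j} A i j * x j / x i` over positive vectors are exactly
the minimizers of the maximum absolute relative error. -/
theorem max_relative_error_eq {n : ℕ} (hn : 0 < n) (A : Matrix (Fin n) (Fin n) ℝ)
    (hA : ∀ i j, 0 < A i j) (hrec : ∀ i j, A i j * A j i = 1)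
    (x : Fin n → ℝ) (hx : ∀ i, 0 < x i) :
    (⨆ i, ⨆ j, |A i j - x i / x j| / A i j) = (⨆ i, ⨆ j, A i j * x j / x i) - 1 ∧
    ((∀ y : Fin n → ℝ, (∀ i, 0 < y i) →
        (⨆ i, ⨆ j, A i j * x j / x i) ≤ ⨆ i, ⨆ j, A i j * y j / y i) ↔
      (∀ y : Fin n → ℝ, (∀ i, 0 < y i) →
        (⨆ i, ⨆ j, |A i j - x i / x j| / A i j) ≤ ⨆ i, ⨆ j, |A i j - y i / y j| / A i j)) := by
  have key := iSup_relative_error_eq hn A hA hrec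
  refine ⟨key x hx, forall₂_congr fun y hy => ?_⟩
  rw [key x hx, key y hy, sub_le_sub_iff_right]
end

section
/- Let A be an n×n matrix with nonnegative real entries satisfying Tr(A) ≤ 1, and let c ∈ ℝ^n be a nonnegative vector. Then a positive vector x ∈ ℝ^n satisfies (A ⊗ x)_i ≤ x_i and c_i ≤ x_i for all i (i.e. A⊗x ⊕ c ≤ x) if and only if there exists a nonnegative vector u ∈ ℝ^n with u ≥ c (entrywise) such that x = A* ⊗ u. -/
/-!
The entry `A^{⊗k} i j` is the largest weight of a walk with `k` steps from `i` to `j`. A walk with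
`n` steps visits `n + 1` positions among `n` indices, so it contains a closed subwalk with between
`1` and `n` steps, of weight at most `1` because `Tr(A) ≤ 1`. Removing it does not decrease the
weight, so `A^{⊗n} ≤ A*` (`mtPow_self_le_star`), and hence `A ⊗ A* ≤ A*`. Therefore every
`x = A* ⊗ u` satisfies `A ⊗ x ≤ x`, and `c ≤ u ≤ x` because `I ≤ A*`. Conversely, `A ⊗ x ≤ x` gives
`A^{⊗k} ⊗ x ≤ x` for all `k`, so `A* ⊗ x = x` and `u = x` works.
-/

open scoped BigOperators

/-- Max-times matrix product: `(A ⊗ B) i j = max_k A i k * B k j`. -/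
noncomputable def mtMul {n : ℕ} (A B : Matrix (Fin n) (Fin n) ℝ) : Matrix (Fin n) (Fin n) ℝ :=
  fun i j => ⨆ k, A i k * B k j

/-- Max-times matrix power, with `A^{⊗0}` the identity matrix. -/
noncomputable def mtPow {n : ℕ} (A : Matrix (Fin n) (Fin n) ℝ) : ℕ → Matrix (Fin n) (Fin n) ℝ
  | 0 => 1
  | k + 1 => mtMul A (mtPow A k)

/-- Tropical trace: `tr A = max_i A i i`. -/
noncomputable def mtTrace {n : ℕ} (A : Matrix (Fin n) (Fin n) ℝ) : ℝ :=
  ⨆ i, A i i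

/-- The function `Tr(A) = max_{k=1,…,n} tr(A^{⊗k})`. -/
noncomputable def mtTr {n : ℕ} (A : Matrix (Fin n) (Fin n) ℝ) : ℝ :=
  ⨆ k ∈ Finset.Icc 1 n, mtTrace (mtPow A k)

/-- Kleene star: entrywise maximum of `I, A, A^{⊗2}, …, A^{⊗(n-1)}`. -/
noncomputable def mtStar {n : ℕ} (A : Matrix (Fin n) (Fin n) ℝ) : Matrix (Fin n) (Fin n) ℝ :=
  fun i j => ⨆ k ∈ Finset.range n, mtPow A k i j

/-- Max-times matrix-vector product: `(A ⊗ x) i = max_j A i j * x j`. -/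
noncomputable def mtVec {n : ℕ} (A : Matrix (Fin n) (Fin n) ℝ) (x : Fin n → ℝ) : Fin n → ℝ :=
  fun i => ⨆ j, A i j * x j

/-- The alternating product `A^{⊗v 0} ⊗ B ⊗ A^{⊗v 1} ⊗ B ⊗ ⋯ ⊗ B ⊗ A^{⊗v k}`
(with exactly `k` factors `B`). -/
noncomputable def mtChain {n : ℕ} (A B : Matrix (Fin n) (Fin n) ℝ) :
    (k : ℕ) → (Fin (k + 1) → ℕ) → Matrix (Fin n) (Fin n) ℝ
  | 0, v => mtPow A (v 0)
  | k + 1, v => mtMul (mtPow A (v 0)) (mtMul B (mtChain A B k fun t => v t.succ))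

/-- `F_{km}`: the entrywise maximum, over all tuples `(i_0,…,i_k)` of nonnegative integers
with `i_0 + ⋯ + i_k = m`, of the products `A^{⊗i_0} ⊗ B ⊗ A^{⊗i_1} ⊗ ⋯ ⊗ B ⊗ A^{⊗i_k}`. -/
noncomputable def mtF {n : ℕ} (A B : Matrix (Fin n) (Fin n) ℝ) (k m : ℕ) :
    Matrix (Fin n) (Fin n) ℝ :=
  fun i j => ⨆ v : { v : Fin (k + 1) → ℕ // ∑ t, v t = m }, mtChain A B k v.1 i j

/-- `h^− M g = max_{i,j} M i j * g j / h i`. -/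
noncomputable def mtHMG {n : ℕ} (h : Fin n → ℝ) (M : Matrix (Fin n) (Fin n) ℝ)
    (g : Fin n → ℝ) : ℝ :=
  ⨆ i, ⨆ j, M i j * g j / h i

/-- The inner supremum over `k ∈ S` is the junk value `0` for `k ∉ S`, which is harmless for
nonnegative `f`. -/
lemma le_biSup_finset (S : Finset ℕ) (f : ℕ → ℝ) (hf : ∀ k, 0 ≤ f k) {k : ℕ} (hk : k ∈ S) :
    f k ≤ ⨆ k ∈ S, f k := by
  have hb : BddAbove (Set.range fun k => ⨆ _ : k ∈ S, f k) := by
    refine ⟨∑ k ∈ S, f k, ?_⟩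
    rintro _ ⟨m, rfl⟩
    exact Real.iSup_le (fun hm => Finset.single_le_sum (fun i _ => hf i) hm)
      (Finset.sum_nonneg fun i _ => hf i)
  refine le_ciSup_of_le hb k ?_
  rw [ciSup_pos hk]

lemma biSup_finset_le (S : Finset ℕ) (f : ℕ → ℝ) {b : ℝ} (hb : 0 ≤ b)
    (h : ∀ k ∈ S, f k ≤ b) : ⨆ k ∈ S, f k ≤ b :=
  Real.iSup_le (fun k => Real.iSup_le (h k) hb) hb

section

variable {n : ℕ} {A : Matrix (Fin n) (Fin n) ℝ}

lemma le_mtMul (A B : Matrix (Fin n) (Fin n) ℝ) (i k j : Fin n) :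
    A i k * B k j ≤ mtMul A B i j :=
  le_ciSup (f := fun k => A i k * B k j) (Set.finite_range _).bddAbove k

lemma exists_eq_mtMul (A B : Matrix (Fin n) (Fin n) ℝ) (i j : Fin n) :
    ∃ k, A i k * B k j = mtMul A B i j := by
  have : Nonempty (Fin n) := ⟨i⟩
  exact exists_eq_ciSup_of_finite (f := fun k => A i k * B k j)

lemma le_mtVec (A : Matrix (Fin n) (Fin n) ℝ) (x : Fin n → ℝ) (i j : Fin n) :
    A i j * x j ≤ mtVec A x i :=
  le_ciSup (f := fun j => A i j * x j) (Set.finite_range _).bddAbove j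

lemma mtVec_le {x : Fin n → ℝ} {i : Fin n} {b : ℝ} (h : ∀ j, A i j * x j ≤ b) :
    mtVec A x i ≤ b := by
  have : Nonempty (Fin n) := ⟨i⟩
  exact ciSup_le h

lemma mtPow_nonneg (hA : ∀ i j, 0 ≤ A i j) (k : ℕ) (i j : Fin n) : 0 ≤ mtPow A k i j := by
  induction k generalizing i j with
  | zero =>
    simp only [mtPow, Matrix.one_apply]
    split_ifs <;> norm_num
  | succ k ih => exact Real.iSup_nonneg fun l => mul_nonneg (hA i l) (ih l j)

lemma mtPow_mul_le (hA : ∀ i j, 0 ≤ A i j) (s r : ℕ) (i m j : Fin n) :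
    mtPow A s i m * mtPow A r m j ≤ mtPow A (s + r) i j := by
  induction s generalizing i with
  | zero =>
    by_cases h : i = m
    · subst h
      simp [mtPow]
    · simpa [mtPow, Matrix.one_apply, h] using mtPow_nonneg hA r i j
  | succ s ih =>
    obtain ⟨l, hl⟩ := exists_eq_mtMul A (mtPow A s) i m
    rw [Nat.succ_add]
    calc mtPow A (s + 1) i m * mtPow A r m j
        = A i l * (mtPow A s l m * mtPow A r m j) := by rw [mtPow, ← hl, mul_assoc]
      _ ≤ A i l * mtPow A (s + r) l j := mul_le_mul_of_nonneg_left (ih l) (hA i l)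
      _ ≤ mtPow A (s + r + 1) i j := le_mtMul _ _ _ _ _

lemma walk_le_mtPow (hA : ∀ i j, 0 ≤ A i j) (k : ℕ) (p : ℕ → Fin n) :
    ∏ t ∈ Finset.range k, A (p t) (p (t + 1)) ≤ mtPow A k (p 0) (p k) := by
  induction k generalizing p with
  | zero => simp [mtPow]
  | succ k ih =>
    rw [Finset.prod_range_succ', mul_comm]
    exact (mul_le_mul_of_nonneg_left (ih fun t => p (t + 1)) (hA _ _)).trans
      (le_mtMul A (mtPow A k) (p 0) (p 1) (p (k + 1)))

/-- Nonzero entries of `A^{⊗k}` are attained by walks; for a zero entry there may be no walk at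
all (for instance `k = 0` and `i ≠ j`). -/
lemma exists_walk (k : ℕ) (i j : Fin n) (h : mtPow A k i j ≠ 0) :
    ∃ p : ℕ → Fin n, p 0 = i ∧ p k = j ∧
      mtPow A k i j = ∏ t ∈ Finset.range k, A (p t) (p (t + 1)) := by
  induction k generalizing i with
  | zero =>
    by_cases hij : i = j
    · exact ⟨fun _ => i, rfl, hij, by subst hij; simp [mtPow]⟩
    · exact absurd (by simp [mtPow, hij]) h
  | succ k ih =>
    obtain ⟨l, hl⟩ := exists_eq_mtMul A (mtPow A k) i j
    have hl' : mtPow A (k + 1) i j = A i l * mtPow A k l j := hl.symm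
    obtain ⟨p, h0, hk, hp⟩ := ih l fun h0 => h (by rw [hl', h0, mul_zero])
    refine ⟨fun t => Nat.casesOn t i p, rfl, hk, ?_⟩
    rw [Finset.prod_range_succ', hl', hp, mul_comm, ← h0]
    rfl

lemma mtPow_diag_le_one (hA : ∀ i j, 0 ≤ A i j) (hTr : mtTr A ≤ 1) {k : ℕ} (h1 : 1 ≤ k)
    (hn : k ≤ n) (i : Fin n) : mtPow A k i i ≤ 1 :=
  ((le_ciSup (f := fun i => mtPow A k i i) (Set.finite_range _).bddAbove i).trans
    (le_biSup_finset (Finset.Icc 1 n) (fun k => mtTrace (mtPow A k))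
      (fun k => Real.iSup_nonneg fun i => mtPow_nonneg hA k i i)
      (Finset.mem_Icc.2 ⟨h1, hn⟩))).trans hTr

lemma mtPow_le_star (hA : ∀ i j, 0 ≤ A i j) {k : ℕ} (hk : k < n) (i j : Fin n) :
    mtPow A k i j ≤ mtStar A i j :=
  le_biSup_finset (Finset.range n) (fun k => mtPow A k i j)
    (fun k => mtPow_nonneg hA k i j) (Finset.mem_range.2 hk)

lemma mtStar_nonneg (hA : ∀ i j, 0 ≤ A i j) (i j : Fin n) : 0 ≤ mtStar A i j :=
  Real.iSup_nonneg fun k => Real.iSup_nonneg fun _ => mtPow_nonneg hA k i j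

/-- Cycle removal: a walk with `n` steps through `n` indices repeats an index, and cutting out the
closed part between the two visits leaves a shorter walk of at least the same weight. -/
lemma mtPow_self_le_star (hA : ∀ i j, 0 ≤ A i j) (hTr : mtTr A ≤ 1) (i j : Fin n) :
    mtPow A n i j ≤ mtStar A i j := by
  by_cases h : mtPow A n i j = 0
  · rw [h]
    exact mtStar_nonneg hA i j
  obtain ⟨p, h0, hn, hp⟩ := exists_walk n i j h
  obtain ⟨s, t, hst, htn, hpst⟩ : ∃ s t : ℕ, s < t ∧ t ≤ n ∧ p s = p t := by
    obtain ⟨a, b, hab, he⟩ := Fintype.exists_ne_map_eq_of_card_lt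
      (fun a : Fin (n + 1) => p a) (by simp)
    have ha := a.2
    have hb := b.2
    rcases lt_or_gt_of_ne (fun h => hab (Fin.ext h) : (a : ℕ) ≠ b) with hlt | hlt
    · exact ⟨a, b, hlt, by omega, he⟩
    · exact ⟨b, a, hlt, by omega, he.symm⟩
  obtain ⟨d, rfl⟩ := Nat.exists_eq_add_of_lt hst
  obtain ⟨r, hr⟩ := Nat.exists_eq_add_of_le htn
  have hsplit : mtPow A n i j = (∏ t ∈ Finset.range s, A (p t) (p (t + 1))) *
      (∏ t ∈ Finset.range (d + 1), A (p (s + t)) (p (s + t + 1))) *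
      ∏ t ∈ Finset.range r, A (p (s + d + 1 + t)) (p (s + d + 1 + t + 1)) := by
    rw [hp, ← Finset.prod_range_add, ← add_assoc, ← Finset.prod_range_add, ← hr]
  have e1 := walk_le_mtPow hA s p
  have e2 : ∏ t ∈ Finset.range (d + 1), A (p (s + t)) (p (s + t + 1)) ≤ 1 := by
    have e := walk_le_mtPow hA (d + 1) fun t => p (s + t)
    have hc : p (s + (d + 1)) = p (s + 0) := hpst.symm
    simp only [hc] at e
    exact e.trans (mtPow_diag_le_one hA hTr (by omega) (by omega) _)
  have e3 := walk_le_mtPow hA r fun t => p (s + d + 1 + t)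
  have hend : p (s + d + 1 + r) = j := by rw [← hr, hn]
  simp only [hend, add_zero, ← hpst] at e3
  rw [h0] at e1
  have hP : ∀ (m : ℕ) (q q' : ℕ → Fin n), 0 ≤ ∏ t ∈ Finset.range m, A (q t) (q' t) :=
    fun m q q' => Finset.prod_nonneg fun t _ => hA _ _
  calc mtPow A n i j ≤ mtPow A s i (p s) * 1 * mtPow A r (p s) j := by
        rw [hsplit]
        exact mul_le_mul (mul_le_mul e1 e2 (hP _ _ _) (mtPow_nonneg hA _ _ _)) e3 (hP _ _ _)
          (mul_nonneg (mtPow_nonneg hA _ _ _) zero_le_one)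
    _ ≤ mtPow A (s + r) i j := by
        rw [mul_one]
        exact mtPow_mul_le hA s r i (p s) j
    _ ≤ mtStar A i j := mtPow_le_star hA (by omega) i j

lemma mul_mtStar_le (hA : ∀ i j, 0 ≤ A i j) (hTr : mtTr A ≤ 1) (i j l : Fin n) :
    A i j * mtStar A j l ≤ mtStar A i l := by
  unfold mtStar
  -- The maximum is pulled out of the product, and only the last exponent needs cycle removal.
  rw [Real.mul_iSup_of_nonneg (hA i j)]
  refine Real.iSup_le (fun k => ?_) (mtStar_nonneg hA i l)
  rw [Real.mul_iSup_of_nonneg (hA i j)]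
  refine Real.iSup_le (fun hk => ?_) (mtStar_nonneg hA i l)
  refine (le_mtMul A (mtPow A k) i j l).trans ?_
  change mtPow A (k + 1) i l ≤ mtStar A i l
  rcases Nat.lt_or_eq_of_le (Nat.succ_le_of_lt (Finset.mem_range.1 hk)) with h | h
  · exact mtPow_le_star hA h i l
  · have h' : k + 1 = n := h
    have e := mtPow_self_le_star hA hTr i l
    rwa [← congrArg (fun m => mtPow A m i l) h'] at e

lemma mtPow_mul_le_of_mtVec_le (hA : ∀ i j, 0 ≤ A i j) {x : Fin n → ℝ}
    (h : ∀ i, mtVec A x i ≤ x i) (k : ℕ) (i j : Fin n) (hx : ∀ i, 0 < x i) :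
    mtPow A k i j * x j ≤ x i := by
  induction k generalizing i with
  | zero =>
    by_cases hij : i = j
    · subst hij
      simp [mtPow]
    · simpa [mtPow, Matrix.one_apply, hij] using (hx i).le
  | succ k ih =>
    obtain ⟨l, hl⟩ := exists_eq_mtMul A (mtPow A k) i j
    calc mtPow A (k + 1) i j * x j = A i l * (mtPow A k l j * x j) := by
          rw [mtPow, ← hl, mul_assoc]
      _ ≤ A i l * x l := mul_le_mul_of_nonneg_left (ih l) (hA i l)
      _ ≤ x i := (le_mtVec A x i l).trans (h i)

/-- `I ≤ A*`, applied to a nonnegative vector. -/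
lemma le_mtVec_star (hA : ∀ i j, 0 ≤ A i j) {u : Fin n → ℝ} (hu : ∀ i, 0 ≤ u i) (i : Fin n) :
    u i ≤ mtVec (mtStar A) u i := by
  have h1 : 1 ≤ mtStar A i i := by
    simpa [mtPow] using mtPow_le_star hA (Nat.zero_lt_of_lt i.2) i i
  exact (le_mul_of_one_le_left (hu i) h1).trans (le_mtVec (mtStar A) u i i)

end

/-- If `Tr(A) ≤ 1`, the positive solutions of `A ⊗ x ⊕ c ≤ x` are exactly the vectors
`x = A* ⊗ u` for nonnegative `u ≥ c`. -/
theorem max_times_kleene_solution {n : ℕ} (A : Matrix (Fin n) (Fin n) ℝ)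
    (hA : ∀ i j, 0 ≤ A i j) (hTr : mtTr A ≤ 1)
    (c : Fin n → ℝ) (hc : ∀ i, 0 ≤ c i)
    (x : Fin n → ℝ) (hx : ∀ i, 0 < x i) :
    ((∀ i, mtVec A x i ≤ x i) ∧ ∀ i, c i ≤ x i) ↔
      ∃ u : Fin n → ℝ, (∀ i, 0 ≤ u i) ∧ (∀ i, c i ≤ u i) ∧
        ∀ i, x i = mtVec (mtStar A) u i := by
  constructor
  · rintro ⟨h, hcx⟩
    refine ⟨x, fun i => (hx i).le, hcx, fun i =>
      le_antisymm (le_mtVec_star hA (fun i => (hx i).le) i) (mtVec_le fun j => ?_)⟩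
    rw [← le_div_iff₀ (hx j)]
    exact biSup_finset_le _ _ (div_pos (hx i) (hx j)).le fun k _ =>
      (le_div_iff₀ (hx j)).2 (mtPow_mul_le_of_mtVec_le hA h k i j hx)
  · rintro ⟨u, hu, hcu, hxu⟩
    refine ⟨fun i => mtVec_le fun j => ?_, fun i => ?_⟩
    · have : Nonempty (Fin n) := ⟨i⟩
      obtain ⟨l, hl⟩ := exists_eq_ciSup_of_finite (f := fun l => mtStar A j l * u l)
      have hl' : x j = mtStar A j l * u l := (hxu j).trans hl.symm
      rw [hl', ← mul_assoc, hxu i]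
      exact (mul_le_mul_of_nonneg_right (mul_mtStar_le hA hTr i j l) (hu l)).trans
        (le_mtVec (mtStar A) u i l)
    · rw [hxu i]
      exact (hcu i).trans (le_mtVec_star hA hu i)
end

section
/- Let A be an n×n matrix with nonnegative real entries satisfying Tr(A) > 1. Then there is no positive vector x ∈ ℝ^n with max_{1≤j≤n} A_{ij}·x_j ≤ x_i for all i = 1,…,n. -/
/-!
If `x` is positive and `A ⊗ x ≤ x`, then `A i j * x j ≤ x i`, and by induction on `k` the same
inequality holds for the entries of `A^{⊗k}` (`mtPow_le_div`). Its diagonal case says that the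
diagonal entries of all the powers are at most `1`, hence `Tr(A) ≤ 1`.
-/

open scoped BigOperators

/-- A subsolution of `A ⊗ x ≤ x` bounds every entry of every max-times power of `A`. -/
theorem mtPow_le_div {n : ℕ} {A : Matrix (Fin n) (Fin n) ℝ} (hA : ∀ i j, 0 ≤ A i j)
    {x : Fin n → ℝ} (hx : ∀ i, 0 < x i) (hAx : ∀ i, (⨆ j, A i j * x j) ≤ x i) (k : ℕ) :
    ∀ i j, mtPow A k i j ≤ x i / x j := by
  induction k with
  | zero =>
    intro i j
    by_cases h : i = j
    · subst h
      simp [mtPow, (hx i).ne']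
    · simpa [mtPow, Matrix.one_apply_ne h] using (div_pos (hx i) (hx j)).le
  | succ k ih =>
    intro i j
    have : Nonempty (Fin n) := ⟨i⟩
    refine ciSup_le fun l => ?_
    calc A i l * mtPow A k l j ≤ A i l * (x l / x j) :=
          mul_le_mul_of_nonneg_left (ih l j) (hA i l)
      _ = A i l * x l / x j := (mul_div_assoc _ _ _).symm
      _ ≤ x i / x j := by
          have h : A i l * x l ≤ x i :=
            (le_ciSup (f := fun j => A i j * x j) (Set.finite_range _).bddAbove l).trans (hAx i)
          exact div_le_div_of_nonneg_right h (hx j).le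

/-- If `Tr(A) > 1`, then there is no positive vector `x` with `A ⊗ x ≤ x`. -/
theorem max_times_no_solution {n : ℕ} (A : Matrix (Fin n) (Fin n) ℝ)
    (hA : ∀ i j, 0 ≤ A i j) (hTr : 1 < mtTr A) :
    ¬∃ x : Fin n → ℝ, (∀ i, 0 < x i) ∧ ∀ i, (⨆ j, A i j * x j) ≤ x i := by
  rintro ⟨x, hx, hAx⟩
  refine hTr.not_ge ?_
  -- An index `k` outside `Icc 1 n` contributes an empty real supremum, which is `0 ≤ 1`.
  refine Real.iSup_le (fun k => Real.iSup_le (fun _ => ?_) zero_le_one) zero_le_one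
  refine Real.iSup_le (fun i => ?_) zero_le_one
  simpa [(hx i).ne'] using mtPow_le_div hA hx hAx k i i
end

section
/- Let (a_i, k_i, m_i) for i in a finite nonempty index set be triples where each a_i is a nonnegative real and k_i, m_i are positive integers, and define for s, t > 0 the functions G(s) = max_i a_i^{1/k_i}·s^{−m_i/k_i} and H(t) = max_i a_i^{1/m_i}·t^{−k_i/m_i} (real powers). If s > 0, t > 0 and G(s) = t, then H(t) = s; i.e. G and H are mutually inverse on positive values. -/
/-!
For positive `s, t`, raising to the `k`-th power shows that the term `a ^ (1/k) * s ^ (-m/k)` of `G`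
satisfies `term ≤ t` iff `a ≤ t ^ k * s ^ m`, and likewise for equality
(`puiseux_term_le_iff`, `puiseux_term_eq_iff`). The right-hand sides are symmetric under exchanging
`(s, m)` with `(t, k)`, so they also characterise the corresponding term of `H` being at most
(or equal to) `s`. Since the index set is finite, `G s = t` says that every term is at most `t`
with equality for some index, and this transfers verbatim to `H t = s`.
-/

/-- Clearing the roots and denominators in a term of a tropical Puiseux polynomial. -/
lemma puiseux_term_pow {a s : ℝ} {k : ℕ} (m : ℕ) (ha : 0 ≤ a) (hk : 0 < k) (hs : 0 < s) :
    (a ^ (1 / (k : ℝ)) * s ^ (-(m : ℝ) / (k : ℝ))) ^ k * s ^ m = a := by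
  have hk' : (k : ℝ) ≠ 0 := by exact_mod_cast hk.ne'
  rw [mul_pow, ← Real.rpow_mul_natCast ha, ← Real.rpow_mul_natCast hs.le,
    div_mul_cancel₀ _ hk', div_mul_cancel₀ _ hk', Real.rpow_one, Real.rpow_neg hs.le,
    Real.rpow_natCast, mul_assoc, inv_mul_cancel₀ (pow_pos hs m).ne', mul_one]

lemma puiseux_term_nonneg {a s : ℝ} (k m : ℕ) (ha : 0 ≤ a) (hs : 0 < s) :
    0 ≤ a ^ (1 / (k : ℝ)) * s ^ (-(m : ℝ) / (k : ℝ)) :=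
  mul_nonneg (Real.rpow_nonneg ha _) (Real.rpow_nonneg hs.le _)

lemma puiseux_term_le_iff {a s t : ℝ} {k : ℕ} (m : ℕ) (ha : 0 ≤ a) (hk : 0 < k)
    (hs : 0 < s) (ht : 0 < t) :
    a ^ (1 / (k : ℝ)) * s ^ (-(m : ℝ) / (k : ℝ)) ≤ t ↔ a ≤ t ^ k * s ^ m := by
  rw [← pow_le_pow_iff_left₀ (puiseux_term_nonneg k m ha hs) ht.le hk.ne',
    ← mul_le_mul_iff_left₀ (pow_pos hs m), puiseux_term_pow m ha hk hs]

lemma puiseux_term_eq_iff {a s t : ℝ} {k : ℕ} (m : ℕ) (ha : 0 ≤ a) (hk : 0 < k)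
    (hs : 0 < s) (ht : 0 < t) :
    a ^ (1 / (k : ℝ)) * s ^ (-(m : ℝ) / (k : ℝ)) = t ↔ a = t ^ k * s ^ m := by
  rw [← pow_left_inj₀ (puiseux_term_nonneg k m ha hs) ht.le hk.ne',
    ← mul_left_inj' (pow_pos hs m).ne', puiseux_term_pow m ha hk hs]

/-- The tropical Puiseux polynomials `G(s) = max_i a i ^ (1/k i) * s ^ (−m i/k i)` and
`H(t) = max_i a i ^ (1/m i) * t ^ (−k i/m i)` are mutually inverse on positive values:
if `G s = t` with `s, t > 0`, then `H t = s`. -/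
theorem puiseux_inverse {ι : Type*} [Fintype ι] [Nonempty ι]
    (a : ι → ℝ) (ha : ∀ i, 0 ≤ a i) (k m : ι → ℕ)
    (hk : ∀ i, 0 < k i) (hm : ∀ i, 0 < m i)
    (s t : ℝ) (hs : 0 < s) (ht : 0 < t)
    (hG : (⨆ i, a i ^ (1 / (k i : ℝ)) * s ^ (-(m i : ℝ) / (k i : ℝ))) = t) :
    (⨆ i, a i ^ (1 / (m i : ℝ)) * t ^ (-(k i : ℝ) / (m i : ℝ))) = s := by
  apply le_antisymm
  · refine ciSup_le fun i => ?_
    rw [puiseux_term_le_iff (k i) (ha i) (hm i) ht hs, mul_comm,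
      ← puiseux_term_le_iff (m i) (ha i) (hk i) hs ht, ← hG]
    exact le_ciSup (f := fun i => a i ^ (1 / (k i : ℝ)) * s ^ (-(m i : ℝ) / (k i : ℝ)))
      (Set.finite_range _).bddAbove i
  · obtain ⟨i, hi⟩ := exists_eq_ciSup_of_finite
      (f := fun i => a i ^ (1 / (k i : ℝ)) * s ^ (-(m i : ℝ) / (k i : ℝ)))
    rw [hG, puiseux_term_eq_iff (m i) (ha i) (hk i) hs ht, mul_comm,
      ← puiseux_term_eq_iff (k i) (ha i) (hm i) ht hs] at hi
    exact le_ciSup_of_le (Set.finite_range _).bddAbove i hi.ge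
end
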